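/- For every integer k ≥ 1, the (k+1)×(k+1) real matrix M with entries M_{j,i} = i^j + (i+1)^j for j, i ∈ {0,1,…,k} (with the convention 0^0 = 1) is invertible; consequently, the order-condition linear system for the two-point-combined k-step finite-difference weights has a unique solution. -/

import Mathlib

open Matrix in
/-- The matrix `v i ^ j + (v i + 1) ^ j` is the Vandermonde matrix of `v` times an upper triangular
matrix with diagonal entries `2`. -/
theorem vandermonde_add_vandermonde_add_one {R : Type*} [CommRing R] {n : ℕ} (v : Fin n → R) :
    vandermonde v + vandermonde (fun i => v i + 1) =
      vandermonde v * (1 + of fun m j : Fin n => ((j : ℕ).choose m : R)) := by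
  rw [mul_add, mul_one]
  congr 1
  ext i j
  simp only [vandermonde_apply, mul_apply, of_apply, add_pow, one_pow, mul_one]
  rw [Fin.sum_univ_eq_sum_range (fun m => v i ^ m * ((j : ℕ).choose m : R)) n]
  refine Finset.sum_subset (Finset.range_subset_range.2 j.isLt) fun m _ hm => ?_
  rw [Nat.choose_eq_zero_of_lt (by simpa using hm), Nat.cast_zero, mul_zero]

open Matrix in
theorem det_vandermonde_add_vandermonde_add_one {R : Type*} [CommRing R] {n : ℕ} (v : Fin n → R) :
    (vandermonde v + vandermonde (fun i => v i + 1)).det = (vandermonde v).det * 2 ^ n := by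
  rw [vandermonde_add_vandermonde_add_one, det_mul,
    det_of_isUpperTriangular (M := 1 + of fun m j : Fin n => ((j : ℕ).choose m : R))]
  · simp [one_add_one_eq_two]
  · intro m j hjm
    have hlt : j < m := hjm
    simp [one_apply_ne hlt.ne', Nat.choose_eq_zero_of_lt (Fin.lt_def.1 hlt)]

/-- The coefficient matrix `M_{j,i} = i^j + (i+1)^j` of the order-condition linear
system for the two-point-combined `k`-step finite-difference weights is invertible,
hence the system has a unique solution. -/
theorem two_point_order_condition_matrix_invertible (k : ℕ) (hk : 1 ≤ k) :
    IsUnit (Matrix.of (fun j i : Fin (k + 1) =>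
        ((i : ℕ) : ℝ) ^ (j : ℕ) + (((i : ℕ) : ℝ) + 1) ^ (j : ℕ))) ∧
    ∃! c : Fin (k + 1) → ℝ,
      ∀ j : Fin (k + 1),
        ∑ i : Fin (k + 1),
            c i * (((i : ℕ) : ℝ) ^ (j : ℕ) + (((i : ℕ) : ℝ) + 1) ^ (j : ℕ)) =
          if (j : ℕ) = 1 then 1 else 0 := by
  set M : Matrix (Fin (k + 1)) (Fin (k + 1)) ℝ := Matrix.of (fun j i : Fin (k + 1) =>
    ((i : ℕ) : ℝ) ^ (j : ℕ) + (((i : ℕ) : ℝ) + 1) ^ (j : ℕ)) with hM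
  have hunit : IsUnit M := by
    have hdet := det_vandermonde_add_vandermonde_add_one (fun i : Fin (k + 1) => ((i : ℕ) : ℝ))
    rw [← Matrix.det_transpose] at hdet
    rw [Matrix.isUnit_iff_isUnit_det, isUnit_iff_ne_zero]
    change M.det = _ at hdet
    rw [hdet]
    refine mul_ne_zero (Matrix.det_vandermonde_ne_zero_iff.2 ?_) (by positivity)
    exact Nat.cast_injective.comp Fin.val_injective
  refine ⟨hunit, ?_⟩
  have hbij : Function.Bijective M.mulVec :=
    ⟨Matrix.mulVec_injective_iff_isUnit.2 hunit, Matrix.mulVec_surjective_iff_isUnit.2 hunit⟩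
  have hsolve := hbij.existsUnique fun j : Fin (k + 1) => if (j : ℕ) = 1 then (1 : ℝ) else 0
  simpa only [funext_iff, Matrix.mulVec, dotProduct, hM, Matrix.of_apply, mul_comm] using hsolve
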